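/- arXiv:1902.10232 — 2 statements merged into one kernel-verified Lean document; each statement's English description precedes it below -/
import Mathlib

section
/- For all nonnegative integers α, β and all distinct nonnegative integers n ≠ m, the Jacobi polynomials are orthogonal with respect to the weight (1-x)^α (1+x)^β on [-1,1]: ∫_{-1}^{1} (1-x)^α (1+x)^β P_n^{α,β}(x) P_m^{α,β}(x) dx = 0. -/
/-- The Jacobi polynomial `P_n^{a,b}` (nonnegative integer parameters `a`, `b`), defined
through the Rodrigues formula. -/
noncomputable def jacobiP (n a b : ℕ) (x : ℝ) : ℝ :=
  ((-1 : ℝ) ^ n / (2 ^ n * n.factorial)) * (1 - x) ^ (-(a : ℤ)) * (1 + x) ^ (-(b : ℤ)) *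
    iteratedDeriv n (fun y : ℝ => (1 - y) ^ (n + a) * (1 + y) ^ (n + b)) x

/-!
Multiplied by its weight, `P_n` is a multiple of the `n`-th derivative of
`(1 - x) ^ (n + a) * (1 + x) ^ (n + b)`, all of whose derivatives of order less than `n` vanish at
`±1`. Integrating by parts `n` times therefore moves all `n` derivatives onto the other factor
without boundary terms, and they annihilate every polynomial of degree less than `n`. Expanding the
Rodrigues formula by the Leibniz rule shows that `P_m` has degree at most `m`, so it is such a
factor when `m < n`.
-/

open Polynomial Finset

section PolynomialCalculus

theorem iteratedDeriv_polynomial_eval {𝕜 : Type*} [NontriviallyNormedField 𝕜] (n : ℕ) (p : 𝕜[X]) :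
    iteratedDeriv n (fun x => p.eval x) = fun x => (derivative^[n] p).eval x := by
  have semiconj : Function.Semiconj (fun (q : 𝕜[X]) x => q.eval x) derivative deriv :=
    fun q => funext fun x => q.deriv.symm
  rw [iteratedDeriv_eq_iterate]
  exact (semiconj.iterate_right n p).symm

theorem isRoot_iterate_derivative_of_pow_dvd {R : Type*} [CommRing R] {p u : R[X]} {r : R}
    {k n : ℕ} (hr : p.IsRoot r) (hu : p ^ n ∣ u) (hk : k < n) : (derivative^[k] u).IsRoot r :=
  hr.dvd <| (dvd_pow_self p (Nat.sub_ne_zero_of_lt hk)).trans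
    (pow_sub_dvd_iterate_derivative_of_pow_dvd k hu)

theorem iterate_derivative_one_sub_X_pow (R : Type*) [CommRing R] (n k : ℕ) :
    derivative^[k] ((1 - X : R[X]) ^ n) =
      (-1) ^ k * (n.descFactorial k : R[X]) * (1 - X) ^ (n - k) := by
  simpa [iterate_derivative_X_pow_eq_natCast_mul, mul_assoc] using
    iterate_derivative_comp_one_sub_X (X ^ n : R[X]) k

theorem iterate_derivative_one_add_X_pow (R : Type*) [CommRing R] (n k : ℕ) :
    derivative^[k] ((1 + X : R[X]) ^ n) = (n.descFactorial k : R[X]) * (1 + X) ^ (n - k) := by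
  simpa [add_comm] using iterate_derivative_X_add_pow n k (1 : R)

variable {a b : ℝ}

theorem integral_derivative_mul_of_isRoot {u : ℝ[X]} (ha : u.IsRoot a) (hb : u.IsRoot b)
    (p : ℝ[X]) :
    ∫ x in a..b, (derivative u).eval x * p.eval x =
      -∫ x in a..b, u.eval x * (derivative p).eval x := by
  rw [intervalIntegral.integral_mul_deriv_eq_deriv_mul (fun x _ => u.hasDerivAt x)
    (fun x _ => p.hasDerivAt x) ((derivative u).continuous.intervalIntegrable _ _)
    ((derivative p).continuous.intervalIntegrable _ _), ha.eq_zero, hb.eq_zero]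
  ring

theorem integral_iterate_derivative_mul_of_isRoot {n : ℕ} {u : ℝ[X]}
    (ha : ∀ k < n, (derivative^[k] u).IsRoot a) (hb : ∀ k < n, (derivative^[k] u).IsRoot b)
    (p : ℝ[X]) :
    ∫ x in a..b, (derivative^[n] u).eval x * p.eval x =
      (-1) ^ n * ∫ x in a..b, u.eval x * (derivative^[n] p).eval x := by
  induction n generalizing p with
  | zero => simp
  | succ n ih =>
    rw [Function.iterate_succ_apply',
      integral_derivative_mul_of_isRoot (ha n n.lt_succ_self) (hb n n.lt_succ_self),
      ih (fun k hk => ha k (hk.trans n.lt_succ_self)) (fun k hk => hb k (hk.trans n.lt_succ_self)),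
      Function.iterate_succ_apply, pow_succ]
    ring

end PolynomialCalculus

/-- The Jacobi polynomial with its denominators cleared, `2 ^ n * P_n^{a,b}`, given by its explicit
expansion in powers of `X - 1` and `X + 1`. Having integer coefficients, it makes sense over every
commutative ring. -/
noncomputable def scaledJacobi (R : Type*) [CommRing R] (n a b : ℕ) : R[X] :=
  ∑ k ∈ range (n + 1),
    ((n + a).choose (n - k) * (n + b).choose k : R[X]) * ((X - 1) ^ k * (X + 1) ^ (n - k))

theorem natDegree_scaledJacobi_le (R : Type*) [CommRing R] (n a b : ℕ) :
    (scaledJacobi R n a b).natDegree ≤ n := by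
  refine natDegree_sum_le_of_forall_le _ _ fun k hk => ?_
  calc _ ≤ k + (n - k) := by compute_degree
    _ = n := Nat.add_sub_of_le (mem_range_succ_iff.mp hk)

theorem iterate_derivative_rodrigues (R : Type*) [CommRing R] (n a b : ℕ) :
    derivative^[n] ((1 - X : R[X]) ^ (n + a) * (1 + X) ^ (n + b)) =
      (-1) ^ n * (n.factorial : R[X]) * ((1 - X) ^ a * (1 + X) ^ b * scaledJacobi R n a b) := by
  rw [iterate_derivative_mul, scaledJacobi, mul_sum, mul_sum]
  refine sum_congr rfl fun k hk => ?_
  obtain ⟨j, rfl⟩ := Nat.exists_eq_add_of_le (mem_range_succ_iff.mp hk)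
  have factorials : ((k + j).choose k * j.factorial * k.factorial : R[X]) = (k + j).factorial := by
    rw [add_comm k j]
    exact_mod_cast congrArg (Nat.cast (R := R[X]))
      (Nat.add_choose_mul_factorial_mul_factorial j k)
  have signs : (-1 : R[X]) ^ j * (1 - X) ^ k = (-1) ^ (k + j) * (X - 1) ^ k := by
    rw [← neg_sub X 1, neg_pow (X - 1 : R[X]), pow_add]
    ring
  rw [iterate_derivative_one_sub_X_pow, iterate_derivative_one_add_X_pow, Nat.add_sub_cancel_left,
    show k + j + a - j = a + k by omega, show k + j + b - k = b + j by omega,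
    Nat.descFactorial_eq_factorial_mul_choose, Nat.descFactorial_eq_factorial_mul_choose,
    nsmul_eq_mul, pow_add, pow_add (1 + X), add_comm X 1]
  push_cast
  linear_combination
    (((k + j + a).choose j : R[X]) * ((k + j + b).choose k : R[X]) *
      (1 - X) ^ a * (1 + X) ^ b * (1 + X) ^ j) *
      ((-1) ^ j * (1 - X) ^ k * factorials + (k + j).factorial * signs)

theorem iteratedDeriv_rodrigues {𝕜 : Type*} [NontriviallyNormedField 𝕜] (n a b : ℕ) (x : 𝕜) :
    iteratedDeriv n (fun y : 𝕜 => (1 - y) ^ (n + a) * (1 + y) ^ (n + b)) x =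
      (-1) ^ n * n.factorial * ((1 - x) ^ a * (1 + x) ^ b * (scaledJacobi 𝕜 n a b).eval x) := by
  let u : 𝕜[X] := (1 - X) ^ (n + a) * (1 + X) ^ (n + b)
  calc
    _ = iteratedDeriv n (fun y => u.eval y) x := by simp [u]
    _ = (derivative^[n] u).eval x := congrFun (iteratedDeriv_polynomial_eval n u) x
    _ = _ := by simp [u, iterate_derivative_rodrigues]

theorem jacobiP_eq_eval_scaledJacobi (n a b : ℕ) {x : ℝ} (hx₁ : x ≠ 1) (hx₂ : x ≠ -1) :
    jacobiP n a b x = (1 / 2 ^ n) * (scaledJacobi ℝ n a b).eval x := by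
  have one_add_ne : 1 + x ≠ 0 := fun h => hx₂ (eq_neg_of_add_eq_zero_right h)
  have sign_sq : ((-1 : ℝ) ^ n) ^ 2 = 1 := by rw [← pow_mul, pow_mul', neg_one_sq, one_pow]
  rw [jacobiP, iteratedDeriv_rodrigues, zpow_neg, zpow_neg, zpow_natCast, zpow_natCast]
  field_simp [sub_ne_zero.mpr hx₁.symm, one_add_ne]
  rw [sign_sq, one_mul]

theorem integral_weight_mul_scaledJacobi_mul_eq_zero {n : ℕ} (a b : ℕ) {p : ℝ[X]}
    (hp : p.natDegree < n) :
    ∫ x in (-1 : ℝ)..1, (1 - x) ^ a * (1 + x) ^ b * (scaledJacobi ℝ n a b).eval x * p.eval x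
      = 0 := by
  set u : ℝ[X] := (1 - X) ^ (n + a) * (1 + X) ^ (n + b)
  have root_neg_one : ∀ k < n, (derivative^[k] u).IsRoot (-1) := fun k =>
    isRoot_iterate_derivative_of_pow_dvd (p := 1 + X) (by simp)
      ((pow_dvd_pow _ (n.le_add_right b)).mul_left _)
  have root_one : ∀ k < n, (derivative^[k] u).IsRoot 1 := fun k =>
    isRoot_iterate_derivative_of_pow_dvd (p := 1 - X) (by simp)
      ((pow_dvd_pow _ (n.le_add_right a)).mul_right _)
  have orthogonal : ∫ x in (-1 : ℝ)..1, (derivative^[n] u).eval x * p.eval x = 0 := by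
    simp [integral_iterate_derivative_mul_of_isRoot root_neg_one root_one,
      iterate_derivative_eq_zero hp]
  simpa [u, iterate_derivative_rodrigues, mul_assoc, n.factorial_ne_zero] using orthogonal

/-- Orthogonality of the Jacobi polynomials with respect to the weight
`(1-x)^a (1+x)^b` on `[-1, 1]`. -/
theorem jacobi_orthogonal (a b n m : ℕ) (hnm : n ≠ m) :
    ∫ x in (-1 : ℝ)..1, (1 - x) ^ a * (1 + x) ^ b * jacobiP n a b x * jacobiP m a b x = 0 := by
  wlog hmn : m < n generalizing n m
  · simpa only [mul_right_comm] using this m n hnm.symm (by omega)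
  have eq_eval : ∀ x ∈ Set.Ioo (-1 : ℝ) 1,
      (1 - x) ^ a * (1 + x) ^ b * jacobiP n a b x * jacobiP m a b x =
        1 / 2 ^ n * (1 / 2 ^ m) * ((1 - x) ^ a * (1 + x) ^ b *
          (scaledJacobi ℝ n a b).eval x * (scaledJacobi ℝ m a b).eval x) := by
    intro x hx
    rw [jacobiP_eq_eval_scaledJacobi n a b hx.2.ne hx.1.ne',
      jacobiP_eq_eval_scaledJacobi m a b hx.2.ne hx.1.ne']
    ring
  rw [intervalIntegral.integral_congr_Ioo_of_le (by norm_num) eq_eval,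
    intervalIntegral.integral_const_mul, integral_weight_mul_scaledJacobi_mul_eq_zero a b
      ((natDegree_scaledJacobi_le ℝ m a b).trans_lt hmn), mul_zero]
end

section
/- For every nonnegative integer m, the family of Dubiner functions {φ_{(i,j)} : i ≥ 0, j ≥ 0, i+j ≤ m} is linearly independent and spans the space of restrictions to the reference triangle T² of all real polynomials in two variables of total degree at most m; in particular this space has dimension (m+1)(m+2)/2 and the Dubiner functions form an L²(T²)-orthogonal basis of it. -/
/-- The two-dimensional Dubiner basis function with indices `(i, j)`. -/
noncomputable def dubiner2 (i j : ℕ) (ξ : ℝ × ℝ) : ℝ :=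
  jacobiP i 0 0 ((1 + 2 * ξ.1 + ξ.2) / (1 - ξ.2)) * ((1 - ξ.2) / 2) ^ i *
    jacobiP j (2 * i + 1) 0 ξ.2

/-- The reference triangle `T² = {(ξ₁,ξ₂) : ξ₁ ≥ -1, ξ₂ ≥ -1, ξ₁+ξ₂ ≤ 0}`. -/
def refTriangle : Set (ℝ × ℝ) := {ξ | -1 ≤ ξ.1 ∧ -1 ≤ ξ.2 ∧ ξ.1 + ξ.2 ≤ 0}

/-- The interior of the reference triangle. -/
def refTriangleInt : Set (ℝ × ℝ) := {ξ | -1 < ξ.1 ∧ -1 < ξ.2 ∧ ξ.1 + ξ.2 < 0}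

/-- The Dubiner functions with total index at most `m`, restricted to the triangle
(viewed as functions on the triangle). -/
noncomputable def dubinerFamily (m : ℕ) :
    {p : ℕ × ℕ // p.1 + p.2 ≤ m} → (↥refTriangleInt → ℝ) :=
  fun p ξ => dubiner2 p.1.1 p.1.2 ξ.1

/-- The space of restrictions to the reference triangle of bivariate real polynomials of
total degree at most `m`. -/
def polyRestrictions (m : ℕ) : Submodule ℝ (↥refTriangleInt → ℝ) :=
  Submodule.span ℝ {f | ∃ q : MvPolynomial (Fin 2) ℝ, q.totalDegree ≤ m ∧
    ∀ ξ : ↥refTriangleInt, f ξ = MvPolynomial.eval ![ξ.1.1, ξ.1.2] q}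

/-!
In the Duffy coordinates `η = (1 + 2x + y) / (1 - y)` and `y`, the Dubiner function `φ_{(i,j)}`
separates into `P_i^{0,0}(η)` and `((1 - y) / 2)^i P_j^{2i+1,0}(y)`. Homogenizing `P_i^{0,0}` clears
the denominator, so `φ_{(i,j)}` is a polynomial of total degree at most `i + j`. The Jacobian of
the Duffy map contributes one more factor `(1 - y) / 2`: orthogonality in `η` forces `i = k`, and
the weight left in `y` is then `(1 - y)^(2i+1)`, for which the `P_j^{2i+1,0}` are orthogonal by
Rodrigues' formula and repeated integration by parts. Orthogonal polynomials of positive norm are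
linearly independent, and there are as many pairs `i + j ≤ m` as monomials of degree at most `m`,
so they form a basis. This transfers to functions because a polynomial vanishing on an open set
is zero.
-/

open MeasureTheory Polynomial

lemma iteratedDeriv_eval {𝕜 : Type*} [NontriviallyNormedField 𝕜] (p : 𝕜[X]) (n : ℕ) :
    iteratedDeriv n (fun x => p.eval x) = fun x => (derivative^[n] p).eval x := by
  induction n with
  | zero => simp
  | succ n ih =>
    ext x
    rw [iteratedDeriv_succ, ih, Polynomial.deriv, Function.iterate_succ_apply']

lemma natDegree_iterate_derivative_eq {R : Type*} [Semiring R] [IsAddTorsionFree R] (p : R[X])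
    (k : ℕ) : (derivative^[k] p).natDegree = p.natDegree - k := by
  induction k with
  | zero => simp
  | succ k ih => rw [Function.iterate_succ_apply', natDegree_derivative, ih, Nat.sub_sub]

lemma iterate_derivative_ne_zero {R : Type*} [Semiring R] [IsAddTorsionFree R] {p : R[X]}
    (hp : p ≠ 0) {k : ℕ} (hk : k ≤ p.natDegree) : derivative^[k] p ≠ 0 := by
  cases k with
  | zero => exact hp
  | succ k =>
    rw [Function.iterate_succ_apply', ne_eq, derivative_eq_zero, natDegree_iterate_derivative_eq]
    omega

section CommSemiring

variable {σ τ R : Type*} [CommSemiring R]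

lemma eval_smul_of_isHomogeneous {p : MvPolynomial σ R} {n : ℕ}
    (hp : p.IsHomogeneous n) (t : R) (x : σ → R) :
    MvPolynomial.eval (t • x) p = t ^ n * MvPolynomial.eval x p := by
  simp only [MvPolynomial.eval_eq, Finset.mul_sum]
  refine Finset.sum_congr rfl fun d hd => ?_
  rw [hp.degree_eq_sum_deg_support hd, ← Finset.prod_pow_eq_pow_sum,
    mul_left_comm, ← Finset.prod_mul_distrib]
  simp only [Pi.smul_apply, smul_eq_mul, mul_pow]

lemma eval_homogenize_mul {p : R[X]} {n : ℕ} (hp : p.natDegree ≤ n)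
    (t x : R) : MvPolynomial.eval ![t * x, t] (p.homogenize n) = t ^ n * p.eval x := by
  have hvec : ![t * x, t] = t • ![x, 1] := by simp
  rw [hvec, eval_smul_of_isHomogeneous (isHomogeneous_homogenize p)]
  exact congrArg _ (eval₂_homogenize_of_eq_one hp (.id R) ![x, 1] rfl)

lemma totalDegree_aeval_le {n : ℕ} (p : MvPolynomial σ R)
    {g : σ → MvPolynomial τ R} (hg : ∀ i, (g i).totalDegree ≤ n) :
    (MvPolynomial.aeval g p).totalDegree ≤ p.totalDegree * n := by
  rw [MvPolynomial.aeval_def, MvPolynomial.eval₂_eq]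
  refine MvPolynomial.totalDegree_finsetSum_le fun d hd => ?_
  calc _ ≤ (∏ i ∈ d.support, g i ^ d i).totalDegree := by
        simpa [MvPolynomial.algebraMap_eq] using
          MvPolynomial.totalDegree_mul (MvPolynomial.C (p.coeff d)) (∏ i ∈ d.support, g i ^ d i)
    _ ≤ ∑ i ∈ d.support, d i * n :=
        (MvPolynomial.totalDegree_finsetProd _ _).trans <| Finset.sum_le_sum fun i _ =>
          (MvPolynomial.totalDegree_pow _ _).trans (Nat.mul_le_mul_left _ (hg i))
    _ ≤ p.totalDegree * n := by
        rw [← Finset.sum_mul]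
        exact Nat.mul_le_mul_right _ (MvPolynomial.le_totalDegree hd)

lemma totalDegree_toMvPolynomial_le (p : R[X]) (i : σ) :
    (p.toMvPolynomial i).totalDegree ≤ p.natDegree := by
  rw [toMvPolynomial, aeval_eq_sum_range]
  refine MvPolynomial.totalDegree_finsetSum_le fun k hk => ?_
  exact (MvPolynomial.totalDegree_smul_le _ _).trans
    ((MvPolynomial.isHomogeneous_X_pow i k).totalDegree_le.trans (Finset.mem_range_succ_iff.mp hk))

end CommSemiring

lemma card_finsupp_degree_le (σ : Type*) [Fintype σ] (m : ℕ) :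
    Nat.card {d : σ →₀ ℕ // d.degree ≤ m} = (m + Fintype.card σ).choose (Fintype.card σ) := by
  classical
  have hdisj : ((Finset.range (m + 1) : Set ℕ)).PairwiseDisjoint
      (Finset.univ : Finset σ).finsuppAntidiag := fun a _ b _ hab =>
    Finset.disjoint_left.mpr fun d ha hb => hab (by simp_all)
  rw [Nat.subtype_card ((Finset.range (m + 1)).biUnion Finset.univ.finsuppAntidiag),
    Finset.card_biUnion hdisj, ← Nat.sum_range_multichoose]
  · simp only [Finset.card_finsuppAntidiag_nat_eq_multichoose, Finset.card_univ]
  · simp [Finsupp.degree_eq_sum]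

lemma finrank_restrictTotalDegree (σ R : Type*) [Fintype σ] [CommRing R] [StrongRankCondition R]
    (m : ℕ) : Module.finrank R (MvPolynomial.restrictTotalDegree σ R m) =
      (m + Fintype.card σ).choose (Fintype.card σ) := by
  rw [← card_finsupp_degree_le]
  exact Module.finrank_eq_nat_card_basis (MvPolynomial.basisRestrictSupport R _)

lemma card_prod_add_le (m : ℕ) : Nat.card {p : ℕ × ℕ // p.1 + p.2 ≤ m} = (m + 2).choose 2 := by
  rw [← Fintype.card_fin 2, ← card_finsupp_degree_le]
  exact Nat.card_congr ((Finsupp.equivFunOnFinite.trans (finTwoArrowEquiv ℕ)).subtypeEquiv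
    fun d => by simp [Finsupp.degree_eq_sum]).symm

/-! ### Jacobi polynomials -/

/-- The Jacobi weight `(1 - x)^a (1 + x)^b`, as a polynomial. -/
noncomputable def jacobiWeight (a b : ℕ) : ℝ[X] := (1 - X) ^ a * (1 + X) ^ b

lemma eval_jacobiWeight (a b : ℕ) (x : ℝ) :
    (jacobiWeight a b).eval x = (1 - x) ^ a * (1 + x) ^ b := by
  simp [jacobiWeight]

lemma natDegree_jacobiWeight (a b : ℕ) : (jacobiWeight a b).natDegree = a + b := by
  unfold jacobiWeight
  compute_degree!

lemma jacobiWeight_ne_zero (a b : ℕ) : jacobiWeight a b ≠ 0 := fun h => by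
  simpa [eval_jacobiWeight] using congrArg (eval 0) h

lemma jacobiWeight_dvd_iterate_derivative (k a b : ℕ) :
    jacobiWeight a b ∣ derivative^[k] (jacobiWeight (k + a) (k + b)) := by
  have hcop : IsCoprime (1 - X : ℝ[X]) (1 + X) :=
    ⟨C (1 / 2), C (1 / 2), by rw [← mul_add]; ring_nf; simp [← C_ofNat, ← C_mul]⟩
  refine hcop.pow.mul_dvd ?_ ?_
  · simpa using pow_sub_dvd_iterate_derivative_of_pow_dvd k
      (Dvd.intro _ rfl : (1 - X) ^ (k + a) ∣ jacobiWeight (k + a) (k + b))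
  · simpa using pow_sub_dvd_iterate_derivative_of_pow_dvd k
      (Dvd.intro_left _ rfl : (1 + X) ^ (k + b) ∣ jacobiWeight (k + a) (k + b))

lemma eval_iterate_derivative_jacobiWeight_eq_zero {k a b : ℕ} (ha : k < a) (hb : k < b) {x : ℝ}
    (hx : x = 1 ∨ x = -1) : (derivative^[k] (jacobiWeight a b)).eval x = 0 := by
  obtain ⟨a, rfl⟩ := Nat.exists_eq_add_of_lt ha
  obtain ⟨b, rfl⟩ := Nat.exists_eq_add_of_lt hb
  refine eval_eq_zero_of_dvd_of_eval_eq_zero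
    (jacobiWeight_dvd_iterate_derivative k (a + 1) (b + 1)) ?_
  rcases hx with rfl | rfl <;> simp [eval_jacobiWeight]

/-- The Jacobi polynomial `P_n^{a,b}` as an element of `ℝ[X]`: the division in the Rodrigues
formula is carried out exactly there, whereas `jacobiP` divides by `0` at the zeros of the
weight. -/
noncomputable def jacobiPoly (n a b : ℕ) : ℝ[X] :=
  C ((-1 : ℝ) ^ n / (2 ^ n * n.factorial)) *
    (derivative^[n] (jacobiWeight (n + a) (n + b)) / jacobiWeight a b)

lemma jacobiWeight_mul_jacobiPoly (n a b : ℕ) :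
    jacobiWeight a b * jacobiPoly n a b =
      C ((-1 : ℝ) ^ n / (2 ^ n * n.factorial)) *
        derivative^[n] (jacobiWeight (n + a) (n + b)) := by
  rw [jacobiPoly, mul_left_comm, EuclideanDomain.mul_div_cancel' (jacobiWeight_ne_zero a b)
    (jacobiWeight_dvd_iterate_derivative n a b)]

lemma jacobiP_eq_eval_jacobiPoly (n a b : ℕ) {x : ℝ} (hx : (jacobiWeight a b).eval x ≠ 0) :
    jacobiP n a b x = (jacobiPoly n a b).eval x := by
  have hrodrigues := congrArg (eval x) (jacobiWeight_mul_jacobiPoly n a b)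
  rw [eval_mul, eval_C_mul] at hrodrigues
  rw [← mul_right_inj' hx, hrodrigues, jacobiP]
  simp only [← eval_jacobiWeight, iteratedDeriv_eval]
  rw [eval_jacobiWeight] at hx ⊢
  simp only [zpow_neg, zpow_natCast]
  field_simp [left_ne_zero_of_mul hx, right_ne_zero_of_mul hx]

lemma jacobiPoly_ne_zero (n a b : ℕ) : jacobiPoly n a b ≠ 0 := by
  refine right_ne_zero_of_mul (a := jacobiWeight a b) ?_
  rw [jacobiWeight_mul_jacobiPoly]
  refine mul_ne_zero (C_ne_zero.mpr (by positivity)) (iterate_derivative_ne_zero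
    (jacobiWeight_ne_zero _ _) ?_)
  rw [natDegree_jacobiWeight]
  omega

lemma natDegree_jacobiPoly (n a b : ℕ) : (jacobiPoly n a b).natDegree = n := by
  have hdeg := congrArg natDegree (jacobiWeight_mul_jacobiPoly n a b)
  rw [natDegree_mul (jacobiWeight_ne_zero a b) (jacobiPoly_ne_zero n a b),
    natDegree_C_mul (by positivity), natDegree_iterate_derivative_eq, natDegree_jacobiWeight,
    natDegree_jacobiWeight] at hdeg
  omega

lemma integral_iterate_derivative_mul {s t : ℝ} (k : ℕ) (w q : ℝ[X])
    (hs : ∀ i < k, (derivative^[i] w).eval s = 0) (ht : ∀ i < k, (derivative^[i] w).eval t = 0) :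
    ∫ x in s..t, (derivative^[k] w * q).eval x =
      (-1) ^ k * ∫ x in s..t, (w * derivative^[k] q).eval x := by
  induction k generalizing q with
  | zero => simp
  | succ k ih =>
    have hparts := intervalIntegral.integral_deriv_mul_eq_sub (a := s) (b := t)
      (fun x _ => (derivative^[k] w).hasDerivAt x) (fun x _ => q.hasDerivAt x)
      ((Polynomial.continuous _).intervalIntegrable _ _)
      ((Polynomial.continuous _).intervalIntegrable _ _)
    rw [hs k k.lt_succ_self, ht k k.lt_succ_self, zero_mul, zero_mul, sub_zero,
      intervalIntegral.integral_add
        (Continuous.intervalIntegrable (by fun_prop) _ _)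
        (Continuous.intervalIntegrable (by fun_prop) _ _)] at hparts
    calc ∫ x in s..t, (derivative^[k + 1] w * q).eval x
        = -∫ x in s..t, (derivative^[k] w * derivative q).eval x := by
          simp only [Function.iterate_succ_apply', eval_mul]
          exact eq_neg_of_add_eq_zero_left hparts
      _ = -((-1) ^ k * ∫ x in s..t, (w * derivative^[k] (derivative q)).eval x) := by
          rw [ih (derivative q) (fun i hi => hs i (hi.trans k.lt_succ_self))
            fun i hi => ht i (hi.trans k.lt_succ_self)]
      _ = (-1) ^ (k + 1) * ∫ x in s..t, (w * derivative^[k + 1] q).eval x := by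
          rw [Function.iterate_succ_apply, pow_succ, mul_neg_one, neg_mul]

lemma integral_jacobiWeight_mul_jacobiPoly_mul_eq_zero (n a b : ℕ) {q : ℝ[X]}
    (hq : q.natDegree < n) :
    ∫ x in (-1 : ℝ)..1, (jacobiWeight a b * jacobiPoly n a b * q).eval x = 0 := by
  simp only [jacobiWeight_mul_jacobiPoly, mul_assoc, eval_C_mul]
  rw [intervalIntegral.integral_const_mul, integral_iterate_derivative_mul n,
    iterate_derivative_eq_zero hq]
  · simp
  · exact fun i hi => eval_iterate_derivative_jacobiWeight_eq_zero (by omega) (by omega) (.inr rfl)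
  · exact fun i hi => eval_iterate_derivative_jacobiWeight_eq_zero (by omega) (by omega) (.inl rfl)

lemma integral_jacobiWeight_mul_jacobiPoly_mul_jacobiPoly_eq_zero (a b : ℕ) {n k : ℕ}
    (h : n ≠ k) :
    ∫ x in (-1 : ℝ)..1, (jacobiWeight a b * (jacobiPoly n a b * jacobiPoly k a b)).eval x = 0 := by
  wlog hlt : k < n generalizing n k
  · simp_rw [mul_comm (jacobiPoly n a b)]
    exact this h.symm (h.lt_of_le (not_lt.mp hlt))
  simp_rw [← mul_assoc]
  exact integral_jacobiWeight_mul_jacobiPoly_mul_eq_zero n a b (by rwa [natDegree_jacobiPoly])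

lemma integral_jacobiWeight_mul_self_pos (a b : ℕ) {p : ℝ[X]} (hp : p ≠ 0) :
    0 < ∫ x in (-1 : ℝ)..1, (jacobiWeight a b * (p * p)).eval x := by
  have hnonneg : ∀ x ∈ Set.Icc (-1 : ℝ) 1, 0 ≤ (jacobiWeight a b * (p * p)).eval x := fun x hx => by
    rw [eval_mul, eval_mul, eval_jacobiWeight]
    exact mul_nonneg (mul_nonneg (pow_nonneg (sub_nonneg.mpr hx.2) a)
      (pow_nonneg (neg_le_iff_add_nonneg'.mp hx.1) b)) (mul_self_nonneg _)
  obtain ⟨x, hx, hroot⟩ : ∃ x ∈ Set.Icc (-1 : ℝ) 1, (jacobiWeight a b * (p * p)).eval x ≠ 0 := by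
    by_contra! hzero
    exact mul_ne_zero (jacobiWeight_ne_zero a b) (mul_self_ne_zero.mpr hp)
      (eq_zero_of_infinite_isRoot _ ((Set.Icc_infinite (by norm_num)).mono hzero))
  exact intervalIntegral.integral_pos (by norm_num) (Polynomial.continuousOn _)
    (fun x hx => hnonneg x (Set.Ioc_subset_Icc_self hx)) ⟨x, hx, (hnonneg x hx).lt_of_ne' hroot⟩

/-! ### Dubiner polynomials -/

/-- The Duffy coordinates of the triangle, inverse to the substitution
`η = (1 + 2 * x + y) / (1 - y)`: they collapse the side `y = 1` of the square `[-1, 1]²` to the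
vertex `(-1, 1)`. -/
noncomputable def duffy (η y : ℝ) : ℝ × ℝ := ((1 - y) / 2 * (1 + η) - 1, y)

/-- The affine forms `(1 + 2x + y) / 2` and `(1 - y) / 2`, whose quotient is the Duffy
coordinate `η`. -/
noncomputable def duffyForms : Fin 2 → MvPolynomial (Fin 2) ℝ :=
  ![(1 / 2 : ℝ) • (1 + 2 * .X 0 + .X 1), (1 / 2 : ℝ) • (1 - .X 1)]

lemma eval_duffyForms (x y : ℝ) :
    (fun k => MvPolynomial.eval ![x, y] (duffyForms k)) = ![(1 + 2 * x + y) / 2, (1 - y) / 2] := by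
  ext k
  fin_cases k <;> simp [duffyForms] <;> ring

lemma totalDegree_duffyForms_le (k : Fin 2) : (duffyForms k).totalDegree ≤ 1 := by
  have hone : 1 ∈ MvPolynomial.restrictTotalDegree (Fin 2) ℝ 1 := by
    simp [MvPolynomial.mem_restrictTotalDegree]
  have hX (i : Fin 2) : MvPolynomial.X i ∈ MvPolynomial.restrictTotalDegree (Fin 2) ℝ 1 := by
    simp [MvPolynomial.mem_restrictTotalDegree]
  rw [← MvPolynomial.mem_restrictTotalDegree, duffyForms]
  fin_cases k
  · refine Submodule.smul_mem _ _ (add_mem (add_mem hone ?_) (hX 1))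
    exact two_mul (MvPolynomial.X 0 : MvPolynomial (Fin 2) ℝ) ▸ add_mem (hX 0) (hX 0)
  · exact Submodule.smul_mem _ _ (sub_mem hone (hX 1))

/-- The Dubiner function `φ_{(i,j)}` as a polynomial: its denominator is cleared by evaluating
the homogenization of `P_i^{0,0}` at `duffyForms`. -/
noncomputable def dubinerPoly (i j : ℕ) : MvPolynomial (Fin 2) ℝ :=
  MvPolynomial.bind₁ duffyForms ((jacobiPoly i 0 0).homogenize i) *
    (jacobiPoly j (2 * i + 1) 0).toMvPolynomial 1

lemma totalDegree_dubinerPoly_le (i j : ℕ) : (dubinerPoly i j).totalDegree ≤ i + j := by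
  refine (MvPolynomial.totalDegree_mul _ _).trans (add_le_add ?_ ?_)
  · refine (totalDegree_aeval_le _ totalDegree_duffyForms_le).trans ?_
    rw [mul_one]
    exact (isHomogeneous_homogenize _).totalDegree_le
  · simpa only [natDegree_jacobiPoly] using
      totalDegree_toMvPolynomial_le (jacobiPoly j (2 * i + 1) 0) (1 : Fin 2)

lemma eval_dubinerPoly (i j : ℕ) (x y : ℝ) :
    MvPolynomial.eval ![x, y] (dubinerPoly i j) =
      MvPolynomial.eval ![(1 + 2 * x + y) / 2, (1 - y) / 2] ((jacobiPoly i 0 0).homogenize i) *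
        (jacobiPoly j (2 * i + 1) 0).eval y := by
  rw [dubinerPoly, map_mul, MvPolynomial.eval_toMvPolynomial, ← eval_duffyForms]
  exact congrArg (· * _) (MvPolynomial.eval₂Hom_bind₁ _ _ _ _)

lemma eval_dubinerPoly_duffy (i j : ℕ) (η y : ℝ) :
    MvPolynomial.eval ![(duffy η y).1, (duffy η y).2] (dubinerPoly i j) =
      (jacobiPoly i 0 0).eval η * ((1 - y) / 2) ^ i * (jacobiPoly j (2 * i + 1) 0).eval y := by
  have hcoord : (1 + 2 * (duffy η y).1 + (duffy η y).2) / 2 = (1 - y) / 2 * η := by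
    simp only [duffy]
    ring
  rw [eval_dubinerPoly, hcoord, duffy,
    eval_homogenize_mul (natDegree_jacobiPoly i 0 0).le, mul_comm (_ ^ i)]

lemma dubiner2_eq_eval_dubinerPoly (i j : ℕ) {ξ : ℝ × ℝ} (hξ : ξ.2 ≠ 1) :
    dubiner2 i j ξ = MvPolynomial.eval ![ξ.1, ξ.2] (dubinerPoly i j) := by
  have hne : 1 - ξ.2 ≠ 0 := sub_ne_zero.mpr hξ.symm
  have hcoord : (1 + 2 * ξ.1 + ξ.2) / 2 = (1 - ξ.2) / 2 * ((1 + 2 * ξ.1 + ξ.2) / (1 - ξ.2)) := by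
    field_simp
  rw [eval_dubinerPoly, hcoord, eval_homogenize_mul (natDegree_jacobiPoly i 0 0).le, dubiner2,
    jacobiP_eq_eval_jacobiPoly i 0 0 (by simp [eval_jacobiWeight]),
    jacobiP_eq_eval_jacobiPoly j (2 * i + 1) 0 (by simpa [eval_jacobiWeight] using hne),
    mul_comm (_ ^ i)]

/-! ### Integration over the triangle -/

lemma setIntegral_prod_eq_integral_setIntegral {α β E : Type*} [MeasurableSpace α]
    [MeasurableSpace β] [NormedAddCommGroup E] [NormedSpace ℝ E] {μ : Measure α} {ν : Measure β}
    [SFinite μ] [SFinite ν] {s : Set (α × β)} (hs : MeasurableSet s) {F : α × β → E}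
    (hF : IntegrableOn F s (μ.prod ν)) :
    ∫ z in s, F z ∂μ.prod ν = ∫ y, ∫ x in (·, y) ⁻¹' s, F (x, y) ∂μ ∂ν := by
  rw [← integral_indicator hs, integral_prod_symm _ (hF.integrable_indicator hs)]
  refine integral_congr_ae (.of_forall fun y => ?_)
  exact integral_indicator (measurable_prodMk_right hs)

lemma isCompact_refTriangle : IsCompact refTriangle := by
  refine (isCompact_Icc (a := ((-1, -1) : ℝ × ℝ)) (b := (1, 1))).of_isClosed_subset ?_ ?_
  · exact (isClosed_le continuous_const continuous_fst).inter
      ((isClosed_le continuous_const continuous_snd).inter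
        (isClosed_le (continuous_fst.add continuous_snd) continuous_const))
  · rintro ⟨x, y⟩ ⟨hx, hy, hxy⟩
    exact ⟨⟨hx, hy⟩, by dsimp only at *; linarith, by dsimp only at *; linarith⟩

lemma preimage_prodMk_refTriangle {y : ℝ} (hy : -1 ≤ y) :
    (·, y) ⁻¹' refTriangle = Set.Icc (-1) (-y) := by
  ext x
  simp [refTriangle, hy, le_neg_iff_add_nonpos_right]

lemma setIntegral_refTriangle {E : Type*} [NormedAddCommGroup E] [NormedSpace ℝ E]
    {F : ℝ × ℝ → E} (hF : IntegrableOn F refTriangle) :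
    ∫ ξ in refTriangle, F ξ = ∫ y in (-1 : ℝ)..1, ∫ x in (-1 : ℝ)..(-y), F (x, y) := by
  have hempty (y : ℝ) (hy : y ∉ Set.Icc (-1) 1) : (·, y) ⁻¹' refTriangle = ∅ := by
    refine Set.eq_empty_of_forall_notMem fun x hx => hy ⟨hx.2.1, ?_⟩
    linarith [hx.1, hx.2.2]
  rw [Measure.volume_eq_prod,
    setIntegral_prod_eq_integral_setIntegral isCompact_refTriangle.measurableSet hF,
    ← setIntegral_eq_integral_of_forall_compl_eq_zero fun y hy => by
      rw [hempty y hy, setIntegral_empty],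
    integral_Icc_eq_integral_Ioc, ← intervalIntegral.integral_of_le (by norm_num)]
  refine intervalIntegral.integral_congr fun y hy => ?_
  rw [Set.uIcc_of_le (by norm_num)] at hy
  simp only [preimage_prodMk_refTriangle hy.1]
  rw [integral_Icc_eq_integral_Ioc, intervalIntegral.integral_of_le (neg_le_neg hy.2)]

lemma setIntegral_refTriangle_duffy {E : Type*} [NormedAddCommGroup E] [NormedSpace ℝ E]
    {F : ℝ × ℝ → E} (hF : IntegrableOn F refTriangle) :
    ∫ ξ in refTriangle, F ξ =
      ∫ y in (-1 : ℝ)..1, ((1 - y) / 2) • ∫ η in (-1 : ℝ)..1, F (duffy η y) := by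
  rw [setIntegral_refTriangle hF]
  refine intervalIntegral.integral_congr fun y _ => ?_
  have hduffy (η : ℝ) : duffy η y = ((1 - y) / 2 * η + ((1 - y) / 2 - 1), y) :=
    Prod.ext (by simp only [duffy]; ring) rfl
  simp only [hduffy]
  rw [intervalIntegral.smul_integral_comp_mul_add (fun x => F (x, y))]
  congr 1 <;> ring

lemma integrableOn_eval_refTriangle (p : MvPolynomial (Fin 2) ℝ) :
    IntegrableOn (fun ξ : ℝ × ℝ => MvPolynomial.eval ![ξ.1, ξ.2] p) refTriangle := by
  refine (Continuous.continuousOn ?_).integrableOn_compact isCompact_refTriangle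
  exact (MvPolynomial.continuous_eval p).comp (by fun_prop)

/-- Integration of polynomials over the triangle. -/
noncomputable def triangleIntegral : MvPolynomial (Fin 2) ℝ →ₗ[ℝ] ℝ where
  toFun p := ∫ ξ in refTriangle, MvPolynomial.eval ![ξ.1, ξ.2] p
  map_add' p q := by
    simp only [map_add]
    exact integral_add (integrableOn_eval_refTriangle p) (integrableOn_eval_refTriangle q)
  map_smul' c p := by
    simp only [MvPolynomial.smul_eval, integral_const_mul, RingHom.id_apply, smul_eq_mul]

/-- The `L²` inner product of the triangle, as a bilinear form on polynomials. -/
noncomputable def triangleForm :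
    MvPolynomial (Fin 2) ℝ →ₗ[ℝ] MvPolynomial (Fin 2) ℝ →ₗ[ℝ] ℝ :=
  (LinearMap.mul ℝ _).compr₂ triangleIntegral

lemma triangleForm_apply (p q : MvPolynomial (Fin 2) ℝ) :
    triangleForm p q = ∫ ξ in refTriangle,
      MvPolynomial.eval ![ξ.1, ξ.2] p * MvPolynomial.eval ![ξ.1, ξ.2] q := by
  simp [triangleForm, triangleIntegral]

lemma triangleForm_dubinerPoly (i j k l : ℕ) :
    triangleForm (dubinerPoly i j) (dubinerPoly k l) =
      (∫ η in (-1 : ℝ)..1, (jacobiPoly i 0 0 * jacobiPoly k 0 0).eval η) *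
        ∫ y in (-1 : ℝ)..1, ((1 - y) / 2) ^ (i + k + 1) *
          (jacobiPoly j (2 * i + 1) 0 * jacobiPoly l (2 * k + 1) 0).eval y := by
  have hint := integrableOn_eval_refTriangle (dubinerPoly i j * dubinerPoly k l)
  simp only [map_mul] at hint
  rw [triangleForm_apply, setIntegral_refTriangle_duffy hint,
    ← intervalIntegral.integral_const_mul]
  refine intervalIntegral.integral_congr fun y _ => ?_
  simp only [eval_dubinerPoly_duffy, smul_eq_mul]
  rw [← intervalIntegral.integral_mul_const, ← intervalIntegral.integral_const_mul]
  refine intervalIntegral.integral_congr fun η _ => ?_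
  simp only [eval_mul]
  ring

lemma integral_half_one_sub_pow_mul (n : ℕ) (p : ℝ[X]) :
    ∫ y in (-1 : ℝ)..1, ((1 - y) / 2) ^ n * p.eval y =
      (1 / 2) ^ n * ∫ y in (-1 : ℝ)..1, (jacobiWeight n 0 * p).eval y := by
  rw [← intervalIntegral.integral_const_mul]
  refine intervalIntegral.integral_congr fun y _ => ?_
  simp only [eval_mul, eval_jacobiWeight, pow_zero, mul_one, ← mul_assoc, ← mul_pow,
    one_div_mul_eq_div]

lemma triangleForm_dubinerPoly_eq_zero {i j k l : ℕ} (h : (i, j) ≠ (k, l)) :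
    triangleForm (dubinerPoly i j) (dubinerPoly k l) = 0 := by
  rw [triangleForm_dubinerPoly, mul_eq_zero]
  rcases eq_or_ne i k with rfl | hik
  · right
    have hjl : j ≠ l := fun hjl => h (by rw [hjl])
    rw [integral_half_one_sub_pow_mul, ← two_mul,
      integral_jacobiWeight_mul_jacobiPoly_mul_jacobiPoly_eq_zero _ _ hjl, mul_zero]
  · left
    simpa [jacobiWeight] using
      integral_jacobiWeight_mul_jacobiPoly_mul_jacobiPoly_eq_zero 0 0 hik

lemma triangleForm_dubinerPoly_self_pos (i j : ℕ) :
    0 < triangleForm (dubinerPoly i j) (dubinerPoly i j) := by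
  rw [triangleForm_dubinerPoly, integral_half_one_sub_pow_mul, ← two_mul]
  refine mul_pos ?_ (mul_pos (by positivity)
    (integral_jacobiWeight_mul_self_pos _ _ (jacobiPoly_ne_zero _ _ _)))
  simpa [jacobiWeight] using integral_jacobiWeight_mul_self_pos 0 0 (jacobiPoly_ne_zero i 0 0)

lemma linearIndependent_dubinerPoly :
    LinearIndependent ℝ fun p : ℕ × ℕ => dubinerPoly p.1 p.2 :=
  LinearMap.linearIndependent_of_isOrthoᵢ (B := triangleForm)
    (LinearMap.isOrthoᵢ_def.mpr fun _ _ h => triangleForm_dubinerPoly_eq_zero h)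
    fun p => (triangleForm_dubinerPoly_self_pos p.1 p.2).ne'

lemma span_dubinerPoly (m : ℕ) :
    Submodule.span ℝ (Set.range fun p : {p : ℕ × ℕ // p.1 + p.2 ≤ m} =>
      dubinerPoly p.1.1 p.1.2) = MvPolynomial.restrictTotalDegree (Fin 2) ℝ m := by
  have hle : Submodule.span ℝ (Set.range fun p : {p : ℕ × ℕ // p.1 + p.2 ≤ m} =>
      dubinerPoly p.1.1 p.1.2) ≤ MvPolynomial.restrictTotalDegree (Fin 2) ℝ m := by
    rw [Submodule.span_le]
    rintro _ ⟨p, rfl⟩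
    exact (MvPolynomial.mem_restrictTotalDegree _ _ _).mpr
      ((totalDegree_dubinerPoly_le _ _).trans p.2)
  refine Submodule.eq_of_le_of_finrank_eq hle ?_
  have := Nat.finite_of_card_ne_zero
    ((card_prod_add_le m).trans_ne (Nat.choose_pos (Nat.le_add_left 2 m)).ne')
  have := Fintype.ofFinite {p : ℕ × ℕ // p.1 + p.2 ≤ m}
  rw [finrank_restrictTotalDegree, Fintype.card_fin, ← card_prod_add_le, Nat.card_eq_fintype_card]
  exact finrank_span_eq_card (linearIndependent_dubinerPoly.comp _ Subtype.val_injective)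

/-! ### Restriction to the triangle -/

/-- Restriction of polynomials to the interior of the triangle, the domain on which
`dubinerFamily` and `polyRestrictions` live. -/
noncomputable def restrictToTriangleInt :
    MvPolynomial (Fin 2) ℝ →ₗ[ℝ] (refTriangleInt → ℝ) :=
  LinearMap.pi fun ξ => (MvPolynomial.aeval ![ξ.1.1, ξ.1.2]).toLinearMap

lemma restrictToTriangleInt_apply (p : MvPolynomial (Fin 2) ℝ) (ξ : refTriangleInt) :
    restrictToTriangleInt p ξ = MvPolynomial.eval ![ξ.1.1, ξ.1.2] p := by
  simp [restrictToTriangleInt, MvPolynomial.aeval_eq_eval]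

lemma restrictToTriangleInt_injective : Function.Injective restrictToTriangleInt := by
  intro p q h
  refine MvPolynomial.funext_set (fun _ => Set.Ioo (-1) 0)
    (fun _ => Set.Ioo_infinite (by norm_num)) fun x hx => ?_
  have hmem : (x 0, x 1) ∈ refTriangleInt :=
    ⟨(hx 0 trivial).1, (hx 1 trivial).1, add_neg (hx 0 trivial).2 (hx 1 trivial).2⟩
  have hx' : ![x 0, x 1] = x := by ext i; fin_cases i <;> rfl
  simpa only [restrictToTriangleInt_apply, hx'] using congrFun h ⟨(x 0, x 1), hmem⟩

lemma restrictToTriangleInt_dubinerPoly (m : ℕ) (p : {p : ℕ × ℕ // p.1 + p.2 ≤ m}) :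
    restrictToTriangleInt (dubinerPoly p.1.1 p.1.2) = dubinerFamily m p := by
  ext ξ
  have hξ : ξ.1.2 ≠ 1 := by linarith [ξ.2.1, ξ.2.2.2]
  rw [restrictToTriangleInt_apply, dubinerFamily, dubiner2_eq_eval_dubinerPoly _ _ hξ]

lemma map_restrictToTriangleInt (m : ℕ) :
    (MvPolynomial.restrictTotalDegree (Fin 2) ℝ m).map restrictToTriangleInt =
      polyRestrictions m := by
  rw [polyRestrictions, ← Submodule.span_eq (Submodule.map _ _)]
  congr 1
  ext f
  simp [MvPolynomial.mem_restrictTotalDegree, funext_iff, restrictToTriangleInt_apply, eq_comm]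

lemma integral_dubiner2_mul_dubiner2 (i j k l : ℕ) :
    ∫ ξ in refTriangle, dubiner2 i j ξ * dubiner2 k l ξ =
      triangleForm (dubinerPoly i j) (dubinerPoly k l) := by
  rw [triangleForm_apply]
  refine setIntegral_congr_ae isCompact_refTriangle.measurableSet ?_
  filter_upwards [Measure.ae_ne volume (-1, 1)] with ξ hne hξ
  have hy : ξ.2 ≠ 1 := fun hy => hne (Prod.ext (le_antisymm (by linarith [hξ.2.2]) hξ.1) hy)
  rw [dubiner2_eq_eval_dubinerPoly _ _ hy, dubiner2_eq_eval_dubinerPoly _ _ hy]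

/-- For every `m`, the Dubiner functions `{φ_{(i,j)} : i + j ≤ m}` are linearly
independent, span the space of restrictions to the reference triangle of polynomials of
total degree at most `m` (a space of dimension `(m+1)(m+2)/2`), and form an L²-orthogonal
family on the triangle. -/
theorem dubiner2_orthogonal_basis (m : ℕ) :
    LinearIndependent ℝ (dubinerFamily m) ∧
    Submodule.span ℝ (Set.range (dubinerFamily m)) = polyRestrictions m ∧
    Module.finrank ℝ (polyRestrictions m) = (m + 1) * (m + 2) / 2 ∧
    (∀ p q : {p : ℕ × ℕ // p.1 + p.2 ≤ m}, p ≠ q →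
      ∫ ξ in refTriangle, dubiner2 p.1.1 p.1.2 ξ * dubiner2 q.1.1 q.1.2 ξ = 0) := by
  have hfamily : dubinerFamily m = restrictToTriangleInt ∘ fun p => dubinerPoly p.1.1 p.1.2 :=
    funext fun p => (restrictToTriangleInt_dubinerPoly m p).symm
  refine ⟨?_, ?_, ?_, fun p q hpq => ?_⟩
  · rw [hfamily]
    exact (linearIndependent_dubinerPoly.comp _ Subtype.val_injective).map'
      restrictToTriangleInt (LinearMap.ker_eq_bot.mpr restrictToTriangleInt_injective)
  · rw [hfamily, Set.range_comp, ← Submodule.map_span, span_dubinerPoly,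
      map_restrictToTriangleInt]
  · rw [← map_restrictToTriangleInt,
      ← (Submodule.equivMapOfInjective _ restrictToTriangleInt_injective _).finrank_eq,
      finrank_restrictTotalDegree, Fintype.card_fin, Nat.choose_two_right, mul_comm]
    rfl
  · rw [integral_dubiner2_mul_dubiner2]
    exact triangleForm_dubinerPoly_eq_zero fun h => hpq (Subtype.ext h)
end
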